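/- Let (X,d,μ) be a space of homogeneous type, let p(·) be an exponent function with p(·) ∈ LH, and let w ∈ A_{p(·)}. Then there exists a constant C₀ depending on p(·), w, and X such that for all quasi-metric balls B, ‖w χ_B‖_{p(·)}^{p₋(B)−p₊(B)} ≤ C₀, where p₋(B) = essinf_{x∈B} p(x) and p₊(B) = esssup_{x∈B} p(x). -/

import Mathlib

open MeasureTheory ENNReal NNReal Filter

namespace SHT

variable {X : Type*} [MeasurableSpace X]

/-- The quasi-metric ball `B(x,r) = {y | d x y < r}`. -/
def ball (d : X → X → ℝ) (x : X) (r : ℝ) : Set X := {y | d x y < r}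

/-- `(X, d, μ)` is a space of homogeneous type with quasi-metric constant `A₀`
and doubling constant `Cμ`. -/
structure IsSHT (d : X → X → ℝ) (μ : Measure X) (A₀ Cμ : ℝ) : Prop where
  d_nonneg : ∀ x y, 0 ≤ d x y
  d_eq_zero_iff : ∀ x y, d x y = 0 ↔ x = y
  d_symm : ∀ x y, d x y = d y x
  one_le_A₀ : 1 ≤ A₀
  d_triangle : ∀ x y z, d x y ≤ A₀ * (d x z + d z y)
  one_le_Cμ : 1 ≤ Cμ
  measurableSet_ball : ∀ x r, MeasurableSet (ball d x r)
  ball_pos : ∀ x r, 0 < r → 0 < μ (ball d x r)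
  ball_ne_top : ∀ x r, 0 < r → μ (ball d x r) ≠ ⊤
  doubling : ∀ x r, 0 < r → μ (ball d x (2 * r)) ≤ ENNReal.ofReal Cμ * μ (ball d x r)

/-- The modular `ρ_{p(·)}(f) = ∫_{X ∖ X_∞} f(x)^{p(x)} dμ + ‖f‖_{L^∞(X_∞)}`
for an (extended-real valued) exponent `p` and a nonnegative function `f`. -/
noncomputable def modular (μ : Measure X) (p : X → ℝ≥0∞) (f : X → ℝ≥0∞) : ℝ≥0∞ :=
  (∫⁻ x in {x | p x ≠ ⊤}, f x ^ (p x).toReal ∂μ) + essSup f (μ.restrict {x | p x = ⊤})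

/-- The Luxemburg norm `‖f‖_{p(·)} = inf {λ > 0 | ρ_{p(·)}(f/λ) ≤ 1}`. -/
noncomputable def luxNorm (μ : Measure X) (p : X → ℝ≥0∞) (f : X → ℝ≥0∞) : ℝ≥0∞ :=
  sInf {lam : ℝ≥0∞ | 0 < lam ∧ modular μ p (fun x => f x / lam) ≤ 1}

/-- The pointwise conjugate exponent `p'(x) = p(x)/(p(x)-1)`, with the conventions
`p'(x) = ∞` if `p(x) = 1` and `p'(x) = 1` if `p(x) = ∞`. -/
noncomputable def conjExp (p : X → ℝ≥0∞) : X → ℝ≥0∞ := fun x =>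
  if p x = ⊤ then 1 else p x / (p x - 1)

/-- A real-valued exponent function viewed as an extended-real valued one. -/
noncomputable def ofRealExp (p : X → ℝ) : X → ℝ≥0∞ := fun x => ENNReal.ofReal (p x)

/-- Local log-Hölder continuity of an exponent function. -/
def LH0 (d : X → X → ℝ) (p : X → ℝ) : Prop :=
  ∃ C₀ : ℝ, 0 < C₀ ∧ ∀ x y, 0 < d x y → d x y < 1 / 2 →
    |p x - p y| ≤ C₀ / (-Real.log (d x y))

/-- Log-Hölder continuity at infinity, with respect to the base point `x₀`
and with limit value `pinf`. -/
def LHinf (d : X → X → ℝ) (x₀ : X) (p : X → ℝ) (pinf : ℝ) : Prop :=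
  ∃ Cinf : ℝ, 0 < Cinf ∧ ∀ x, |p x - pinf| ≤ Cinf / Real.log (Real.exp 1 + d x x₀)

/-- Global log-Hölder continuity. -/
def LH (d : X → X → ℝ) (x₀ : X) (p : X → ℝ) : Prop :=
  LH0 d p ∧ ∃ pinf : ℝ, LHinf d x₀ p pinf

/-- `w` is a weight: measurable, positive and finite a.e., and locally integrable. -/
def IsWeight (d : X → X → ℝ) (μ : Measure X) (w : X → ℝ≥0∞) : Prop :=
  Measurable w ∧ (∀ᵐ x ∂μ, 0 < w x ∧ w x < ⊤) ∧
    ∀ (x : X) (r : ℝ), 0 < r → (∫⁻ y in ball d x r, w y ∂μ) ≠ ⊤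

/-- The variable Muckenhoupt condition `w ∈ A_{p(·)}`:
`‖w χ_B‖_{p(·)} ‖w⁻¹ χ_B‖_{p'(·)} ≤ K μ(B)` for all quasi-metric balls `B`. -/
def Apvar (d : X → X → ℝ) (μ : Measure X) (p : X → ℝ≥0∞) (w : X → ℝ≥0∞) : Prop :=
  ∃ K : ℝ≥0, ∀ (x : X) (r : ℝ), 0 < r →
    luxNorm μ p ((ball d x r).indicator w) *
      luxNorm μ (conjExp p) ((ball d x r).indicator fun y => (w y)⁻¹) ≤ K * μ (ball d x r)

/-- The uncentered Hardy–Littlewood maximal operator over quasi-metric balls. -/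
noncomputable def maximal (d : X → X → ℝ) (μ : Measure X) (f : X → ℝ≥0∞) (x : X) : ℝ≥0∞ :=
  ⨆ (z : X) (r : ℝ) (_ : 0 < r ∧ x ∈ ball d z r),
    (μ (ball d z r))⁻¹ * ∫⁻ y in ball d z r, f y ∂μ

/-- `f ∈ L^{p(·)}`: the modular of `f/λ` is finite for some `λ > 0`. -/
def MemLpvar (μ : Measure X) (p : X → ℝ≥0∞) (f : X → ℝ≥0∞) : Prop :=
  ∃ lam : ℝ≥0∞, 0 < lam ∧ modular μ p (fun x => f x / lam) < ⊤

/-!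
Write `N = ‖w χ_B‖` for `B = B(z, r)`, and compare `B` with `B' = B(z, R)`,
`R = A₀ (1 + d(z, x₀) + r)`, which contains both `B` and `B(x₀, 1)`. Hölder's inequality for
`χ_B = (w χ_B) (w⁻¹ χ_{B'})` and the `A_{p(·)}` condition on `B'` give
`μ(B) ‖w χ_{B'}‖ ≤ 2 K μ(B') N`. Doubling bounds `μ(B') / μ(B)` by a power of `T = R / r`, and
`‖w χ_{B'}‖ ≥ ‖w χ_{B(x₀, 1)}‖ > 0`, so `N⁻¹ ≤ A T ^ m`. It remains to bound
`(p₊(B) - p₋(B)) log T`. Here `log T` is at most a constant plus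
`log⁺ ((1 + d(z, x₀)) / (A₀ (1 + r)))` plus `log⁺ (1 / (2 r))`. The second logarithm is absorbed by
local log-Hölder continuity. The first is absorbed by log-Hölder continuity at infinity, since
`1 + d(z, x₀) ≤ A₀ (1 + r) (1 + d(x, x₀))` for every `x ∈ B`.
-/

section EssentialOscillation

/-- The essential oscillation of a real function: `p₊(B) - p₋(B)` is `essOsc p (μ.restrict B)`.
Meaningful only for essentially bounded functions, because `essSup` and `essInf` take junk values
on unbounded real functions. -/
noncomputable def essOsc (f : X → ℝ) (ν : Measure X) : ℝ := essSup f ν - essInf f ν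

variable {ν : Measure X} {f : X → ℝ} {c M t : ℝ}

theorem ae_mem_Icc_of_ae_abs_sub_le (h : ∀ᵐ x ∂ν, |f x - c| ≤ M) :
    ((fun _ => c - M) ≤ᵐ[ν] f) ∧ f ≤ᵐ[ν] fun _ => c + M := by
  constructor <;> filter_upwards [h] with x hx <;> linarith [abs_le.1 hx]

variable [NeZero ν]

theorem essOsc_nonneg (h : ∀ᵐ x ∂ν, |f x - c| ≤ M) : 0 ≤ essOsc f ν :=
  have ⟨hlower, hupper⟩ := ae_mem_Icc_of_ae_abs_sub_le h
  sub_nonneg.2 (liminf_le_limsup ⟨_, hupper⟩ ⟨_, hlower⟩)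

theorem essOsc_le (h : ∀ᵐ x ∂ν, |f x - c| ≤ M) : essOsc f ν ≤ 2 * M := by
  obtain ⟨hlower, hupper⟩ := ae_mem_Icc_of_ae_abs_sub_le h
  have hsup : essSup f ν ≤ c + M :=
    essSup_le_of_ae_le _ hupper (IsBoundedUnder.isCoboundedUnder_le ⟨_, hlower⟩)
  have hinf : c - M ≤ essInf f ν :=
    le_essInf_of_ae_le _ hlower (IsBoundedUnder.isCoboundedUnder_ge ⟨_, hupper⟩)
  rw [essOsc]
  linarith

theorem essOsc_mul_le (ht : 0 ≤ t) (h : ∀ᵐ x ∂ν, |f x - c| * t ≤ M) :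
    essOsc f ν * t ≤ 2 * M := by
  rcases ht.eq_or_lt with rfl | ht
  · obtain ⟨x, hx⟩ := h.exists
    linarith
  · rw [← le_div_iff₀ ht, mul_div_assoc]
    exact essOsc_le (h.mono fun x hx => (le_div_iff₀ ht).2 hx)

end EssentialOscillation

section LogHolder

variable {Y : Type*} {d : Y → Y → ℝ} {p : Y → ℝ} {x₀ : Y} {pinf A : ℝ}

theorem LH0.exists_abs_sub_mul_posLog_le (hd : ∀ x y, 0 ≤ d x y)
    (hd0 : ∀ x y, d x y = 0 → x = y) (h : LH0 d p) :
    ∃ C, ∀ z r, ∀ x ∈ ball d z r, |p x - p z| * Real.posLog (2 * r)⁻¹ ≤ C := by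
  obtain ⟨C, hC, hLH⟩ := h
  refine ⟨C, fun z r x (hx : d z x < r) => ?_⟩
  rcases (hd z x).eq_or_lt with hzx | hzx
  · simpa [hd0 z x hzx.symm] using hC.le
  have hr : 0 < r := hzx.trans hx
  rcases le_or_gt (1 / 2) r with hr_ge | hr_lt
  · have hlog : Real.posLog (2 * r)⁻¹ = 0 := by
      rw [Real.posLog_eq_zero_iff, abs_of_pos (by positivity)]
      exact inv_le_one_of_one_le₀ (by linarith)
    rw [hlog, mul_zero]
    exact hC.le
  have hlog_pos : 0 < -Real.log (d z x) := neg_pos.2 (Real.log_neg hzx (by linarith))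
  have hlog : Real.posLog (2 * r)⁻¹ ≤ -Real.log (d z x) := by
    rw [← Real.log_inv]
    refine max_le (by rw [Real.log_inv]; exact hlog_pos.le) (Real.log_le_log (by positivity) ?_)
    exact inv_anti₀ hzx (by linarith)
  calc |p x - p z| * Real.posLog (2 * r)⁻¹
      ≤ |p z - p x| * -Real.log (d z x) := by rw [abs_sub_comm]; gcongr
    _ ≤ C := (le_div_iff₀ hlog_pos).1 (hLH z x hzx (by linarith))

theorem LHinf.exists_abs_sub_mul_log_le (hd : ∀ x, 0 ≤ d x x₀) (h : LHinf d x₀ p pinf) :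
    ∃ C, ∀ x, |p x - pinf| * Real.log (Real.exp 1 + d x x₀) ≤ C := by
  obtain ⟨C, -, hLH⟩ := h
  refine ⟨C, fun x => (le_div_iff₀ (Real.log_pos ?_)).1 (hLH x)⟩
  linarith [hd x, Real.add_one_lt_exp one_ne_zero]

theorem LHinf.exists_abs_sub_le (hd : ∀ x, 0 ≤ d x x₀) (h : LHinf d x₀ p pinf) :
    ∃ C, ∀ x, |p x - pinf| ≤ C := by
  obtain ⟨C, hC⟩ := h.exists_abs_sub_mul_log_le hd
  refine ⟨C, fun x => (le_mul_of_one_le_right (abs_nonneg _) ?_).trans (hC x)⟩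
  rw [Real.le_log_iff_exp_le (by linarith [hd x, Real.exp_pos 1])]
  linarith [hd x]

theorem LHinf.exists_abs_sub_mul_posLog_le (hd : ∀ x y, 0 ≤ d x y) (hA : 1 ≤ A)
    (htri : ∀ x y z, d x y ≤ A * (d x z + d z y)) (h : LHinf d x₀ p pinf) :
    ∃ C, ∀ z r, ∀ x ∈ ball d z r,
      |p x - pinf| * Real.posLog ((1 + d z x₀) / (A * (1 + r))) ≤ C := by
  obtain ⟨C, hC⟩ := h.exists_abs_sub_mul_log_le (hd · x₀)
  refine ⟨C, fun z r x (hx : d z x < r) => le_trans ?_ (hC x)⟩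
  have hr : 0 < r := (hd z x).trans_lt hx
  have hz := hd z x₀
  have hx₀ := hd x x₀
  have hexp := Real.add_one_lt_exp one_ne_zero
  have hdist : 1 + d z x₀ ≤ (1 + d x x₀) * (A * (1 + r)) :=
    calc 1 + d z x₀ ≤ A + A * (r + d x x₀) := by
          gcongr
          exact (htri z x₀ x).trans (by gcongr)
      _ ≤ (1 + d x x₀) * (A * (1 + r)) := by nlinarith [mul_nonneg hr.le hx₀]
  have hratio : (1 + d z x₀) / (A * (1 + r)) ≤ Real.exp 1 + d x x₀ := by
    refine ((div_le_iff₀ (by positivity)).2 hdist).trans ?_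
    linarith
  have hone : 1 ≤ |Real.exp 1 + d x x₀| := by rw [abs_of_pos] <;> linarith
  rw [← Real.posLog_eq_log hone]
  gcongr

theorem log_mul_add_div_le {D r : ℝ} (hA : 1 ≤ A) (hD : 0 ≤ D) (hr : 0 < r) :
    Real.log (A * (1 + D + r) / r) ≤ 3 * Real.log 2 + 2 * Real.log A +
      Real.posLog ((1 + D) / (A * (1 + r))) + Real.posLog (2 * r)⁻¹ := by
  set s := (1 + D) / (A * (1 + r)) with hs
  set t := (2 * r)⁻¹ with ht
  have hfactor : A * (1 + D + r) / r ≤ A * ((1 + A * s) * (1 + 2 * t)) := by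
    have hexpand : A * ((1 + A * s) * (1 + 2 * t)) = A * (1 + r + (1 + D)) / r := by
      rw [hs, ht]
      field_simp
      ring
    rw [hexpand]
    gcongr A * ?_ / r
    linarith
  have hlogA : Real.posLog A = Real.log A := Real.posLog_eq_log (hA.trans (le_abs_self A))
  have hlog2 : Real.posLog 2 = Real.log 2 := Real.posLog_eq_log (by norm_num)
  have hlog1 := Real.posLog_one
  calc Real.log (A * (1 + D + r) / r)
      ≤ Real.posLog (A * ((1 + A * s) * (1 + 2 * t))) :=
        (Real.log_le_log (by positivity) hfactor).trans (le_max_right _ _)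
    _ ≤ Real.posLog A + (Real.posLog (1 + A * s) + Real.posLog (1 + 2 * t)) :=
        Real.posLog_mul.trans (by gcongr; exact Real.posLog_mul)
    _ ≤ _ := by
        linarith [Real.posLog_add (x := 1) (y := A * s), Real.posLog_add (x := 1) (y := 2 * t),
          Real.posLog_mul (x := A) (y := s), Real.posLog_mul (x := 2) (y := t)]

end LogHolder

section Modular

variable {μ : Measure X} {p f g : X → ℝ≥0∞} {c : ℝ≥0∞}

theorem modular_mono (h : f ≤ g) : modular μ p f ≤ modular μ p g :=
  add_le_add (lintegral_mono fun x => ENNReal.rpow_le_rpow (h x) toReal_nonneg)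
    (essSup_mono_ae (.of_forall h))

theorem ae_le_modular (hp : Measurable p) (f : X → ℝ≥0∞) :
    ∀ᵐ x ∂μ, p x = ⊤ → f x ≤ modular μ p f := by
  have hae := (ae_restrict_iff' (measurableSet_eq_fun hp measurable_const)).1
    (ENNReal.ae_le_essSup (μ := μ.restrict {x | p x = ⊤}) f)
  filter_upwards [hae] with x hx hpx
  exact (hx hpx).trans le_add_self

theorem modular_const_mul_le (hp : Measurable p) (hp1 : ∀ x, 1 ≤ p x) (hc : c ≤ 1)
    (f : X → ℝ≥0∞) : modular μ p (fun x => c * f x) ≤ c * modular μ p f := by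
  have hc_top : c ≠ ⊤ := ne_top_of_le_ne_top one_ne_top hc
  rw [modular, modular, mul_add, ENNReal.essSup_const_mul, ← lintegral_const_mul' _ _ hc_top]
  gcongr ?_ + _
  refine setLIntegral_mono' (measurableSet_eq_fun hp measurable_const).compl fun x hx => ?_
  rw [ENNReal.mul_rpow_of_nonneg _ _ toReal_nonneg]
  gcongr
  exact ENNReal.rpow_le_self_of_le_one hc (ENNReal.toReal_mono hx (hp1 x))

theorem luxNorm_mono (h : f ≤ g) : luxNorm μ p f ≤ luxNorm μ p g :=
  sInf_le_sInf fun _ ⟨hpos, hg⟩ =>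
    ⟨hpos, (modular_mono fun x => ENNReal.div_le_div_right (h x) _).trans hg⟩

theorem modular_div_le_one (h : luxNorm μ p f < c) : modular μ p (fun x => f x / c) ≤ 1 := by
  obtain ⟨lam, ⟨-, hlam⟩, hlt⟩ := sInf_lt_iff.1 h
  exact (modular_mono fun x => ENNReal.div_le_div_left hlt.le _).trans hlam

theorem modular_le_luxNorm (hp : Measurable p) (hp1 : ∀ x, 1 ≤ p x) (h : luxNorm μ p f < 1) :
    modular μ p f ≤ luxNorm μ p f := by
  refine le_of_forall_gt_imp_ge_of_dense fun c hc => ?_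
  wlog hc1 : c ≤ 1 generalizing c
  · exact (this 1 h le_rfl).trans (not_le.1 hc1).le
  have hc0 : c ≠ 0 := (pos_of_gt hc).ne'
  have hc_top : c ≠ ⊤ := ne_top_of_le_ne_top one_ne_top hc1
  calc modular μ p f = modular μ p (fun x => c * (f x / c)) := by
        simp only [ENNReal.mul_div_cancel hc0 hc_top]
    _ ≤ c * modular μ p (fun x => f x / c) := modular_const_mul_le hp hp1 hc1 _
    _ ≤ c := mul_le_of_le_one_right' (modular_div_le_one hc)

theorem ae_eq_zero_of_luxNorm_eq_zero (hp : Measurable p) (hp1 : ∀ x, 1 ≤ p x)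
    (hf : Measurable f) (h : luxNorm μ p f = 0) : f =ᵐ[μ] 0 := by
  have hmod : modular μ p f = 0 := by
    simpa [h] using modular_le_luxNorm hp hp1 (h.trans_lt one_pos)
  have hint := (ae_restrict_iff' (measurableSet_eq_fun hp measurable_const).compl).1
    ((lintegral_eq_zero_iff (hf.pow hp.ennreal_toReal)).1 (add_eq_zero.1 hmod).1)
  filter_upwards [hint, ae_le_modular hp f] with x hfin htop
  by_cases hpx : p x = ⊤
  · exact le_antisymm ((htop hpx).trans_eq hmod) zero_le
  · exact (ENNReal.rpow_eq_zero_iff_of_pos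
      (toReal_pos (one_pos.trans_le (hp1 x)).ne' hpx)).1 (hfin hpx)

theorem luxNorm_indicator_ne_zero (hp : Measurable p) (hp1 : ∀ x, 1 ≤ p x) (hf : Measurable f)
    (hf0 : ∀ᵐ x ∂μ, f x ≠ 0) {S : Set X} (hS : MeasurableSet S) (hμS : μ S ≠ 0) :
    luxNorm μ p (S.indicator f) ≠ 0 := by
  intro h
  refine hμS (measure_eq_zero_iff_ae_notMem.2 ?_)
  filter_upwards [ae_eq_zero_of_luxNorm_eq_zero hp hp1 (hf.indicator hS) h, hf0] with x hx hfx hxS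
  exact hfx (by simpa [hxS] using hx)

end Modular

section Holder

theorem mul_le_rpow_add_rpow (p q : ℝ≥0∞) [p.HolderConjugate q] {a b : ℝ≥0∞}
    (ha : p = ⊤ → a ≤ 1) (hb : q = ⊤ → b ≤ 1) :
    a * b ≤ (if p ≠ ⊤ then a ^ p.toReal else 0) + (if q ≠ ⊤ then b ^ q.toReal else 0) := by
  rcases eq_or_ne p ⊤ with rfl | hp
  · have hq : q = 1 := by simpa using HolderConjugate.conj_eq (p := ⊤) (q := q)
    simpa [hq] using mul_le_of_le_one_left' (ha rfl)
  rcases eq_or_ne q ⊤ with rfl | hq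
  · have hsymm : (⊤ : ℝ≥0∞).HolderConjugate p := HolderConjugate.symm
    have hp : p = 1 := by simpa using HolderConjugate.conj_eq (p := ⊤) (q := p)
    simpa [hp] using mul_le_of_le_one_right' (hb rfl)
  have hpq := HolderConjugate.toReal_of_ne_top hp hq
  rw [if_pos hp, if_pos hq]
  refine (ENNReal.young_inequality a b hpq).trans (add_le_add ?_ ?_)
  · exact ENNReal.div_le_of_le_mul (le_mul_of_one_le_right' (by simpa using hpq.lt.le))
  · exact ENNReal.div_le_of_le_mul (le_mul_of_one_le_right' (by simpa using hpq.symm.lt.le))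

variable {μ : Measure X} {p q f g : X → ℝ≥0∞}

theorem lintegral_mul_le_modular_add_modular (hp : Measurable p) (hq : Measurable q)
    (hpq : ∀ x, (p x).HolderConjugate (q x)) (hf : Measurable f)
    (hf1 : modular μ p f ≤ 1) (hg1 : modular μ q g ≤ 1) :
    ∫⁻ x, f x * g x ∂μ ≤ modular μ p f + modular μ q g := by
  have hpfin : MeasurableSet {x | p x ≠ ⊤} := (measurableSet_eq_fun hp measurable_const).compl
  have hqfin : MeasurableSet {x | q x ≠ ⊤} := (measurableSet_eq_fun hq measurable_const).compl
  calc ∫⁻ x, f x * g x ∂μ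
      ≤ ∫⁻ x, {x | p x ≠ ⊤}.indicator (fun x => f x ^ (p x).toReal) x +
          {x | q x ≠ ⊤}.indicator (fun x => g x ^ (q x).toReal) x ∂μ := by
        refine lintegral_mono_ae ?_
        filter_upwards [ae_le_modular hp f, ae_le_modular hq g] with x hfx hgx
        have := hpq x
        classical
        simpa only [Set.indicator_apply, Set.mem_ofPred_eq] using
          mul_le_rpow_add_rpow (p x) (q x) (fun h => (hfx h).trans hf1) fun h => (hgx h).trans hg1
    _ = ∫⁻ x in {x | p x ≠ ⊤}, f x ^ (p x).toReal ∂μ +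
          ∫⁻ x in {x | q x ≠ ⊤}, g x ^ (q x).toReal ∂μ := by
        rw [lintegral_add_left ((hf.pow hp.ennreal_toReal).indicator hpfin),
          lintegral_indicator hpfin, lintegral_indicator hqfin]
    _ ≤ modular μ p f + modular μ q g := add_le_add le_self_add le_self_add

theorem lintegral_mul_le_two_mul_luxNorm_mul_luxNorm (hp : Measurable p) (hq : Measurable q)
    (hpq : ∀ x, (p x).HolderConjugate (q x)) (hf : Measurable f) (hg : Measurable g) :
    ∫⁻ x, f x * g x ∂μ ≤ 2 * (luxNorm μ p f * luxNorm μ q g) := by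
  have hp1 : ∀ x, 1 ≤ p x := fun x => have := hpq x; HolderConjugate.one_le (p x) (q x)
  have hq1 : ∀ x, 1 ≤ q x := fun x => have := (hpq x).symm; HolderConjugate.one_le (q x) (p x)
  by_cases hf0 : luxNorm μ p f = 0
  · have hfg : (fun x => f x * g x) =ᵐ[μ] 0 :=
      (ae_eq_zero_of_luxNorm_eq_zero hp hp1 hf hf0).mono fun x hx => by simp [hx]
    simp [lintegral_congr_ae hfg]
  by_cases hg0 : luxNorm μ q g = 0
  · have hfg : (fun x => f x * g x) =ᵐ[μ] 0 :=
      (ae_eq_zero_of_luxNorm_eq_zero hq hq1 hg hg0).mono fun x hx => by simp [hx]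
    simp [lintegral_congr_ae hfg]
  rw [mul_comm, ← ENNReal.div_le_iff_le_mul (by simp) (by simp)]
  refine ENNReal.le_mul_of_forall_lt (.inl hf0) (.inr hg0) fun a ha b hb => ?_
  rw [ENNReal.div_le_iff_le_mul (by simp) (by simp)]
  have ha0 : a ≠ 0 := (pos_of_gt ha).ne'
  have hb0 : b ≠ 0 := (pos_of_gt hb).ne'
  rcases eq_or_ne a ⊤ with rfl | ha_top
  · simp [hb0]
  rcases eq_or_ne b ⊤ with rfl | hb_top
  · simp [ha0]
  calc ∫⁻ x, f x * g x ∂μ = ∫⁻ x, a * b * (f x / a * (g x / b)) ∂μ := by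
        refine lintegral_congr fun x => ?_
        rw [mul_mul_mul_comm, ENNReal.mul_div_cancel ha0 ha_top, ENNReal.mul_div_cancel hb0 hb_top]
    _ = a * b * ∫⁻ x, f x / a * (g x / b) ∂μ :=
        lintegral_const_mul' _ _ (ENNReal.mul_ne_top ha_top hb_top)
    _ ≤ a * b * (1 + 1) := by
        gcongr
        have hfa := modular_div_le_one ha
        have hgb := modular_div_le_one hb
        exact (lintegral_mul_le_modular_add_modular hp hq hpq (hf.div_const a) hfa hgb).trans
          (add_le_add hfa hgb)
    _ = a * b * 2 := by rw [one_add_one_eq_two]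

theorem holderConjugate_conjExp {Y : Type*} {p : Y → ℝ≥0∞} {x : Y} (hp1 : 1 ≤ p x) :
    (p x).HolderConjugate (conjExp p x) := by
  suffices h : conjExp p x = (p x).conjExponent from h ▸ HolderConjugate.conjExponent hp1
  rw [conjExp, ENNReal.conjExponent]
  split_ifs with htop
  · simp [htop]
  rcases hp1.eq_or_lt with hone | hlt
  · simp [← hone]
  have hpos : p x - 1 ≠ 0 := (tsub_pos_of_lt hlt).ne'
  have hfin : p x - 1 ≠ ⊤ := ENNReal.sub_ne_top htop
  calc p x / (p x - 1) = (p x - 1 + 1) / (p x - 1) := by rw [tsub_add_cancel_of_le hp1]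
    _ = 1 + (p x - 1)⁻¹ := by rw [ENNReal.add_div, ENNReal.div_self hpos hfin, one_div]

theorem measurable_conjExp (hp : Measurable p) : Measurable (conjExp p) :=
  Measurable.ite (measurableSet_eq_fun hp measurable_const) measurable_const
    (hp.div (hp.sub_const 1))

theorem measure_mul_luxNorm_indicator_le (hp : Measurable p) (hq : Measurable q)
    (hpq : ∀ x, (p x).HolderConjugate (q x)) {w : X → ℝ≥0∞} (hw : Measurable w)
    (hw0 : ∀ᵐ x ∂μ, 0 < w x ∧ w x < ⊤) {S T : Set X} (hS : MeasurableSet S)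
    (hT : MeasurableSet T) (hST : S ⊆ T) {K : ℝ≥0∞}
    (hK : luxNorm μ p (T.indicator w) * luxNorm μ q (T.indicator fun x => (w x)⁻¹) ≤ K * μ T) :
    μ S * luxNorm μ p (T.indicator w) ≤ 2 * K * μ T * luxNorm μ p (S.indicator w) := by
  have hmul : ∫⁻ x, S.indicator w x * T.indicator (fun y => (w y)⁻¹) x ∂μ = μ S := by
    rw [← lintegral_indicator_one hS]
    refine lintegral_congr_ae ?_
    filter_upwards [hw0] with x hx
    by_cases hxS : x ∈ S
    · simp [hxS, hST hxS, ENNReal.mul_inv_cancel hx.1.ne' hx.2.ne]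
    · simp [hxS]
  calc μ S * luxNorm μ p (T.indicator w)
      ≤ 2 * (luxNorm μ p (S.indicator w) * luxNorm μ q (T.indicator fun x => (w x)⁻¹)) *
          luxNorm μ p (T.indicator w) := by
        rw [← hmul]
        gcongr
        exact lintegral_mul_le_two_mul_luxNorm_mul_luxNorm hp hq hpq (hw.indicator hS)
          (hw.inv.indicator hT)
    _ = 2 * luxNorm μ p (S.indicator w) *
          (luxNorm μ p (T.indicator w) * luxNorm μ q (T.indicator fun x => (w x)⁻¹)) := by ring
    _ ≤ 2 * luxNorm μ p (S.indicator w) * (K * μ T) := by gcongr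
    _ = 2 * K * μ T * luxNorm μ p (S.indicator w) := by ring

end Holder

section Doubling

variable {d : X → X → ℝ} {μ : Measure X} {Cμ : ℝ}

theorem ball_mono {Y : Type*} {d : Y → Y → ℝ} {x : Y} {r R : ℝ} (h : r ≤ R) :
    ball d x r ⊆ ball d x R :=
  fun _ hy => lt_of_lt_of_le hy h

theorem measure_ball_two_pow_mul_le {x : X} {r : ℝ} (hr : 0 < r) (hC : 0 ≤ Cμ)
    (hdoubling : ∀ r, 0 < r → μ (ball d x (2 * r)) ≤ ENNReal.ofReal Cμ * μ (ball d x r)) (n : ℕ) :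
    μ (ball d x (2 ^ n * r)) ≤ ENNReal.ofReal (Cμ ^ n) * μ (ball d x r) := by
  induction n with
  | zero => simp
  | succ n ih =>
    rw [pow_succ', mul_assoc, pow_succ', ENNReal.ofReal_mul hC, mul_assoc]
    exact (hdoubling _ (by positivity)).trans (by gcongr)

theorem measure_ball_le_mul_rpow_logb {x : X} {r R : ℝ} (hr : 0 < r) (hrR : r ≤ R) (hC : 1 ≤ Cμ)
    (hdoubling : ∀ r, 0 < r → μ (ball d x (2 * r)) ≤ ENNReal.ofReal Cμ * μ (ball d x r)) :
    μ (ball d x R) ≤ ENNReal.ofReal (Cμ * (R / r) ^ Real.logb 2 Cμ) * μ (ball d x r) := by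
  obtain ⟨n, hn, hn'⟩ := exists_nat_pow_near ((one_le_div hr).2 hrR) one_lt_two
  have hpow : Cμ ^ n ≤ (R / r) ^ Real.logb 2 Cμ :=
    calc Cμ ^ n = ((2 : ℝ) ^ n) ^ Real.logb 2 Cμ := by
          rw [← Real.rpow_pow_comm zero_le_two, Real.rpow_logb two_pos (by norm_num) (by linarith)]
      _ ≤ (R / r) ^ Real.logb 2 Cμ :=
          Real.rpow_le_rpow (by positivity) hn (Real.logb_nonneg one_lt_two hC)
  calc μ (ball d x R) ≤ μ (ball d x (2 ^ (n + 1) * r)) :=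
        measure_mono (ball_mono ((div_le_iff₀ hr).1 hn'.le))
    _ ≤ ENNReal.ofReal (Cμ ^ (n + 1)) * μ (ball d x r) :=
        measure_ball_two_pow_mul_le hr (by linarith) hdoubling _
    _ ≤ ENNReal.ofReal (Cμ * (R / r) ^ Real.logb 2 Cμ) * μ (ball d x r) := by
        rw [pow_succ']
        gcongr

end Doubling

section Homogeneous

variable {d : X → X → ℝ} {μ : Measure X} {A₀ Cμ : ℝ}

theorem IsSHT.neZero_restrict_ball (hX : IsSHT d μ A₀ Cμ) (z : X) {r : ℝ} (hr : 0 < r) :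
    NeZero (μ.restrict (ball d z r)) :=
  have : NeZero (μ (ball d z r)) := ⟨(hX.ball_pos z r hr).ne'⟩
  inferInstance

theorem IsSHT.exists_essOsc_le (hX : IsSHT d μ A₀ Cμ) {x₀ : X} {p : X → ℝ} {pinf : ℝ}
    (h : LHinf d x₀ p pinf) :
    ∃ P, ∀ z r, 0 < r →
      0 ≤ essOsc p (μ.restrict (ball d z r)) ∧ essOsc p (μ.restrict (ball d z r)) ≤ P := by
  obtain ⟨C, hC⟩ := h.exists_abs_sub_le (hX.d_nonneg · x₀)
  refine ⟨2 * C, fun z r hr => ?_⟩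
  have := hX.neZero_restrict_ball z hr
  exact ⟨essOsc_nonneg (.of_forall hC), essOsc_le (.of_forall hC)⟩

theorem IsSHT.exists_essOsc_mul_log_le (hX : IsSHT d μ A₀ Cμ) {x₀ : X} {p : X → ℝ}
    (h : LH d x₀ p) :
    ∃ M, ∀ z r, 0 < r →
      essOsc p (μ.restrict (ball d z r)) * Real.log (A₀ * (1 + d z x₀ + r) / r) ≤ M := by
  obtain ⟨h0, pinf, hinf⟩ := h
  obtain ⟨P, hP⟩ := hX.exists_essOsc_le hinf
  obtain ⟨C, hC⟩ := h0.exists_abs_sub_mul_posLog_le hX.d_nonneg fun x y => (hX.d_eq_zero_iff x y).1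
  obtain ⟨C', hC'⟩ := hinf.exists_abs_sub_mul_posLog_le hX.d_nonneg hX.one_le_A₀ hX.d_triangle
  refine ⟨P * (3 * Real.log 2 + 2 * Real.log A₀) + 2 * C' + 2 * C, fun z r hr => ?_⟩
  have := hX.neZero_restrict_ball z hr
  have hball := ae_restrict_mem (μ := μ) (hX.measurableSet_ball z r)
  have hlocal := essOsc_mul_le Real.posLog_nonneg (hball.mono (hC z r))
  have hinfty := essOsc_mul_le Real.posLog_nonneg (hball.mono (hC' z r))
  obtain ⟨hnonneg, hle⟩ := hP z r hr
  set ω := essOsc p (μ.restrict (ball d z r))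
  have hconst : 0 ≤ 3 * Real.log 2 + 2 * Real.log A₀ := by
    linarith [Real.log_pos one_lt_two, Real.log_nonneg hX.one_le_A₀]
  calc ω * Real.log (A₀ * (1 + d z x₀ + r) / r)
      ≤ ω * (3 * Real.log 2 + 2 * Real.log A₀ +
          Real.posLog ((1 + d z x₀) / (A₀ * (1 + r))) + Real.posLog (2 * r)⁻¹) := by
        gcongr
        exact log_mul_add_div_le hX.one_le_A₀ (hX.d_nonneg z x₀) hr
    _ ≤ P * (3 * Real.log 2 + 2 * Real.log A₀) + 2 * C' + 2 * C := by
        rw [mul_add, mul_add]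
        gcongr

theorem IsSHT.le_mul_one_add_add (hX : IsSHT d μ A₀ Cμ) (z x₀ : X) {r : ℝ} (hr : 0 ≤ r) :
    r ≤ A₀ * (1 + d z x₀ + r) := by
  nlinarith [hX.one_le_A₀, hX.d_nonneg z x₀]

theorem IsSHT.ball_one_subset_ball (hX : IsSHT d μ A₀ Cμ) (z x₀ : X) {r : ℝ} (hr : 0 ≤ r) :
    ball d x₀ 1 ⊆ ball d z (A₀ * (1 + d z x₀ + r)) := by
  intro y (hy : d x₀ y < 1)
  have hA₀ := zero_lt_one.trans_le hX.one_le_A₀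
  exact (hX.d_triangle z y x₀).trans_lt (mul_lt_mul_of_pos_left (by linarith) hA₀)

theorem IsSHT.luxNorm_indicator_ball_one_le (hX : IsSHT d μ A₀ Cμ) {p q w : X → ℝ≥0∞}
    (hp : Measurable p) (hq : Measurable q) (hpq : ∀ x, (p x).HolderConjugate (q x))
    (hw : Measurable w) (hw0 : ∀ᵐ x ∂μ, 0 < w x ∧ w x < ⊤) {K : ℝ≥0∞}
    (hK : ∀ z r, 0 < r → luxNorm μ p ((ball d z r).indicator w) *
      luxNorm μ q ((ball d z r).indicator fun x => (w x)⁻¹) ≤ K * μ (ball d z r))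
    (z x₀ : X) {r : ℝ} (hr : 0 < r) :
    luxNorm μ p ((ball d x₀ 1).indicator w) ≤
      2 * K * ENNReal.ofReal (Cμ * (A₀ * (1 + d z x₀ + r) / r) ^ Real.logb 2 Cμ) *
        luxNorm μ p ((ball d z r).indicator w) := by
  set R := A₀ * (1 + d z x₀ + r)
  set N := luxNorm μ p ((ball d z r).indicator w)
  have hrR : r ≤ R := hX.le_mul_one_add_add z x₀ hr.le
  have hmono : luxNorm μ p ((ball d x₀ 1).indicator w) ≤ luxNorm μ p ((ball d z R).indicator w) :=
    luxNorm_mono (Set.indicator_le_indicator_of_subset (hX.ball_one_subset_ball z x₀ hr.le)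
      fun _ => zero_le)
  rw [← ENNReal.mul_le_mul_iff_right (hX.ball_pos z r hr).ne' (hX.ball_ne_top z r hr)]
  calc μ (ball d z r) * luxNorm μ p ((ball d x₀ 1).indicator w)
      ≤ μ (ball d z r) * luxNorm μ p ((ball d z R).indicator w) := by gcongr
    _ ≤ 2 * K * μ (ball d z R) * N :=
        measure_mul_luxNorm_indicator_le hp hq hpq hw hw0 (hX.measurableSet_ball z r)
          (hX.measurableSet_ball z R) (ball_mono hrR) (hK z R (hr.trans_le hrR))
    _ ≤ 2 * K * (ENNReal.ofReal (Cμ * (R / r) ^ Real.logb 2 Cμ) * μ (ball d z r)) * N := by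
        gcongr
        exact measure_ball_le_mul_rpow_logb hr hrR hX.one_le_Cμ (hX.doubling z)
    _ = _ := by ring

theorem IsSHT.exists_inv_luxNorm_le (hX : IsSHT d μ A₀ Cμ) (x₀ : X) {p w : X → ℝ≥0∞}
    (hp : Measurable p) (hp1 : ∀ x, 1 ≤ p x) (hw : Measurable w)
    (hw0 : ∀ᵐ x ∂μ, 0 < w x ∧ w x < ⊤) (hap : Apvar d μ p w) :
    ∃ A : ℝ≥0, ∀ z r, 0 < r → (luxNorm μ p ((ball d z r).indicator w))⁻¹ ≤
      A * ENNReal.ofReal ((A₀ * (1 + d z x₀ + r) / r) ^ Real.logb 2 Cμ) := by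
  obtain ⟨K, hK⟩ := hap
  set c := luxNorm μ p ((ball d x₀ 1).indicator w)
  have hc : c ≠ 0 := luxNorm_indicator_ne_zero hp hp1 hw (hw0.mono fun _ h => h.1.ne')
    (hX.measurableSet_ball x₀ 1) (hX.ball_pos x₀ 1 one_pos).ne'
  have hA : 2 * K * ENNReal.ofReal Cμ / c ≠ ⊤ := ENNReal.div_ne_top (by finiteness) hc
  refine ⟨(2 * K * ENNReal.ofReal Cμ / c).toNNReal, fun z r hr => ?_⟩
  have hle := hX.luxNorm_indicator_ball_one_le hp (measurable_conjExp hp)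
    (fun x => holderConjugate_conjExp (hp1 x)) hw hw0 hK z x₀ hr
  rw [ENNReal.ofReal_mul (by linarith [hX.one_le_Cμ]), ← mul_assoc] at hle
  rw [ENNReal.coe_toNNReal hA, ENNReal.mul_comm_div, ← mul_div_assoc,
    ENNReal.le_div_iff_mul_le (.inl hc) (.inr (by finiteness)), mul_comm, ← div_eq_mul_inv]
  exact ENNReal.div_le_of_le_mul hle

end Homogeneous

theorem rpow_neg_le_of_inv_le {N : ℝ≥0∞} {A : ℝ≥0} {T m t P M : ℝ} (hT : 0 < T) (hm : 0 ≤ m)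
    (hN : N⁻¹ ≤ A * ENNReal.ofReal (T ^ m)) (ht : 0 ≤ t) (htP : t ≤ P)
    (htM : t * Real.log T ≤ M) :
    N ^ (-t) ≤ ↑((1 + A) ^ P * (Real.exp (m * M)).toNNReal) := by
  calc N ^ (-t) = N⁻¹ ^ t := by rw [ENNReal.rpow_neg, ENNReal.inv_rpow]
    _ ≤ (A * ENNReal.ofReal (T ^ m)) ^ t := by gcongr
    _ = (A : ℝ≥0∞) ^ t * ENNReal.ofReal (Real.exp (m * (t * Real.log T))) := by
        rw [ENNReal.mul_rpow_of_nonneg _ _ ht, ENNReal.ofReal_rpow_of_pos (by positivity),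
          ← Real.rpow_mul hT.le, Real.rpow_def_of_pos hT]
        ring_nf
    _ ≤ (1 + A : ℝ≥0∞) ^ t * ENNReal.ofReal (Real.exp (m * M)) := by
        gcongr
        exact le_add_self
    _ ≤ (1 + A : ℝ≥0∞) ^ P * ENNReal.ofReal (Real.exp (m * M)) := by
        gcongr
        exact le_self_add
    _ = ↑((1 + A) ^ P * (Real.exp (m * M)).toNNReal) := by
        have h1A : 1 + A ≠ 0 := by positivity
        rw [ENNReal.coe_mul, ENNReal.coe_rpow_of_ne_zero h1A, ENNReal.coe_add, ENNReal.coe_one,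
          ENNReal.ofReal]

theorem luxNorm_rpow_osc_le
    {X : Type*} [MeasurableSpace X] (d : X → X → ℝ) (μ : Measure X) (A₀ Cμ : ℝ)
    (hX : IsSHT d μ A₀ Cμ) (x₀ : X)
    (p : X → ℝ) (hpmeas : Measurable p) (hp1 : ∀ x, 1 ≤ p x)
    (hLH : LH d x₀ p)
    (w : X → ℝ≥0∞) (hw : IsWeight d μ w) (hap : Apvar d μ (ofRealExp p) w) :
    ∃ C₀ : ℝ≥0, ∀ (z : X) (rad : ℝ), 0 < rad →
      luxNorm μ (ofRealExp p) ((ball d z rad).indicator w) ^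
          (essInf p (μ.restrict (ball d z rad)) - essSup p (μ.restrict (ball d z rad))) ≤ C₀ := by
  obtain ⟨pinf, hinf⟩ := hLH.2
  obtain ⟨P, hP⟩ := hX.exists_essOsc_le hinf
  obtain ⟨M, hM⟩ := hX.exists_essOsc_mul_log_le hLH
  obtain ⟨A, hA⟩ := hX.exists_inv_luxNorm_le x₀ hpmeas.ennreal_ofReal
    (fun x => ENNReal.one_le_ofReal.2 (hp1 x)) hw.1 hw.2.1 hap
  refine ⟨(1 + A) ^ P * (Real.exp (Real.logb 2 Cμ * M)).toNNReal, fun z rad hrad => ?_⟩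
  have hratio : 0 < A₀ * (1 + d z x₀ + rad) / rad := by
    have := hX.d_nonneg z x₀
    have := hX.one_le_A₀
    positivity
  rw [← neg_sub, ← essOsc]
  exact rpow_neg_le_of_inv_le hratio (Real.logb_nonneg one_lt_two hX.one_le_Cμ) (hA z rad hrad)
    (hP z rad hrad).1 (hP z rad hrad).2 (hM z rad hrad)

end SHT
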